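/- In the labelled sequent calculus G3Q.K, every rule is height-preserving invertible: if the conclusion of a rule instance is derivable with height at most n, then each of its premisses is derivable with height at most n (after renaming eigenvariables if necessary). -/

import Mathlib

/-- Formulas of quantified modal logic (predicates named by ℕ, variables ℕ). -/
inductive Fml where
  | atom : ℕ → List ℕ → Fml
  | bot : Fml
  | and : Fml → Fml → Fml
  | or : Fml → Fml → Fml
  | imp : Fml → Fml → Fml
  | all : ℕ → Fml → Fml
  | ex : ℕ → Fml → Fml
  | box : Fml → Fml
  | dia : Fml → Fml
deriving DecidableEq

/-- A varying-domain quantified modal model over worlds `W` and objects `D`. -/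
structure Model (W D : Type) where
  R : W → W → Prop
  dom : W → Set D
  V : ℕ → W → List D → Prop

/-- Satisfaction of a formula at a world under an assignment. -/
def Sat {W D : Type} (M : Model W D) (σ : ℕ → D) (w : W) : Fml → Prop
  | .atom P args => M.V P w (args.map σ)
  | .bot => False
  | .and A B => Sat M σ w A ∧ Sat M σ w B
  | .or A B => Sat M σ w A ∨ Sat M σ w B
  | .imp A B => Sat M σ w A → Sat M σ w B
  | .all x A => ∀ o ∈ M.dom w, Sat M (Function.update σ x o) w A
  | .ex x A => ∃ o ∈ M.dom w, Sat M (Function.update σ x o) w A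
  | .box A => ∀ v, M.R w v → Sat M σ v A
  | .dia A => ∃ v, M.R w v ∧ Sat M σ v A

/-- A quantified modal frame. -/
structure Frame (W D : Type) where
  R : W → W → Prop
  dom : W → Set D

/-- Validity on a frame: truth at every world under every assignment in
every model based on the frame. -/
def ValidOn {W D : Type} (F : Frame W D) (A : Fml) : Prop :=
  ∀ V : ℕ → W → List D → Prop, ∀ σ : ℕ → D, ∀ w : W,
    Sat (Model.mk F.R F.dom V) σ w A

/-- Naive substitution of variable `y` for free occurrences of `x`
(capture-avoiding provided `y` is fresh). -/
def Fml.substV (x y : ℕ) : Fml → Fml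
  | .atom P args => .atom P (args.map fun z => if z = x then y else z)
  | .bot => .bot
  | .and A B => .and (A.substV x y) (B.substV x y)
  | .or A B => .or (A.substV x y) (B.substV x y)
  | .imp A B => .imp (A.substV x y) (B.substV x y)
  | .all z A => if z = x then .all z A else .all z (A.substV x y)
  | .ex z A => if z = x then .ex z A else .ex z (A.substV x y)
  | .box A => .box (A.substV x y)
  | .dia A => .dia (A.substV x y)

/-- All variables (free or bound) occurring in a formula. -/
def Fml.vars : Fml → Set ℕ
  | .atom _ args => {z | z ∈ args}
  | .bot => ∅
  | .and A B => A.vars ∪ B.vars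
  | .or A B => A.vars ∪ B.vars
  | .imp A B => A.vars ∪ B.vars
  | .all z A => insert z A.vars
  | .ex z A => insert z A.vars
  | .box A => A.vars
  | .dia A => A.vars

/-- Items occurring in antecedents of labelled sequents: labelled formulas
`w : A`, domain atoms `x ∈ w`, and relational atoms `w R v`
(labels and variables are both `ℕ`). -/
inductive LSForm where
  | lab : ℕ → Fml → LSForm
  | mem : ℕ → ℕ → LSForm
  | rel : ℕ → ℕ → LSForm
deriving DecidableEq

/-- Variables occurring in an antecedent item. -/
def LSForm.vars : LSForm → Set ℕ
  | .lab _ A => A.vars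
  | .mem x _ => {x}
  | .rel _ _ => ∅

/-- Labels occurring in an antecedent item. -/
def LSForm.labs : LSForm → Set ℕ
  | .lab w _ => {w}
  | .mem _ w => {w}
  | .rel w v => {w, v}

/-- Variables occurring in a sequent (succedents are multisets of labelled
formulas, coded as pairs `(label, formula)`). -/
def seqVars (Γ : Multiset LSForm) (Δ : Multiset (ℕ × Fml)) : Set ℕ :=
  {x | (∃ E ∈ Γ, x ∈ E.vars) ∨ (∃ p ∈ Δ, x ∈ (Prod.snd p).vars)}

/-- Labels occurring in a sequent. -/
def seqLabs (Γ : Multiset LSForm) (Δ : Multiset (ℕ × Fml)) : Set ℕ :=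
  {w | (∃ E ∈ Γ, w ∈ E.labs) ∨ (∃ p ∈ Δ, Prod.fst p = w)}

/-- `Der n Γ Δ`: the labelled sequent `Γ ⇒ Δ` is derivable in the labelled
calculus G3Q.K with height at most `n`. -/
inductive Der : ℕ → Multiset LSForm → Multiset (ℕ × Fml) → Prop where
  | init (n : ℕ) (w P : ℕ) (args : List ℕ) (Γ : Multiset LSForm) (Δ : Multiset (ℕ × Fml)) :
      Der n (.lab w (.atom P args) ::ₘ Γ) ((w, .atom P args) ::ₘ Δ)
  | lbot (n w : ℕ) (Γ : Multiset LSForm) (Δ : Multiset (ℕ × Fml)) :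
      Der n (.lab w .bot ::ₘ Γ) Δ
  | land {n : ℕ} {w : ℕ} {A B : Fml} {Γ : Multiset LSForm} {Δ : Multiset (ℕ × Fml)} :
      Der n (.lab w A ::ₘ .lab w B ::ₘ Γ) Δ →
      Der (n + 1) (.lab w (.and A B) ::ₘ Γ) Δ
  | rand {n w} {A B : Fml} {Γ : Multiset LSForm} {Δ : Multiset (ℕ × Fml)} :
      Der n Γ ((w, A) ::ₘ Δ) → Der n Γ ((w, B) ::ₘ Δ) →
      Der (n + 1) Γ ((w, .and A B) ::ₘ Δ)
  | lor {n w} {A B : Fml} {Γ : Multiset LSForm} {Δ : Multiset (ℕ × Fml)} :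
      Der n (.lab w A ::ₘ Γ) Δ → Der n (.lab w B ::ₘ Γ) Δ →
      Der (n + 1) (.lab w (.or A B) ::ₘ Γ) Δ
  | ror {n w} {A B : Fml} {Γ : Multiset LSForm} {Δ : Multiset (ℕ × Fml)} :
      Der n Γ ((w, A) ::ₘ (w, B) ::ₘ Δ) →
      Der (n + 1) Γ ((w, .or A B) ::ₘ Δ)
  | limp {n w} {A B : Fml} {Γ : Multiset LSForm} {Δ : Multiset (ℕ × Fml)} :
      Der n Γ ((w, A) ::ₘ Δ) → Der n (.lab w B ::ₘ Γ) Δ →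
      Der (n + 1) (.lab w (.imp A B) ::ₘ Γ) Δ
  | rimp {n w} {A B : Fml} {Γ : Multiset LSForm} {Δ : Multiset (ℕ × Fml)} :
      Der n (.lab w A ::ₘ Γ) ((w, B) ::ₘ Δ) →
      Der (n + 1) Γ ((w, .imp A B) ::ₘ Δ)
  | lall {n w x y} {A : Fml} {Γ : Multiset LSForm} {Δ : Multiset (ℕ × Fml)} :
      Der n (.lab w (A.substV x y) ::ₘ .mem y w ::ₘ .lab w (.all x A) ::ₘ Γ) Δ →
      Der (n + 1) (.mem y w ::ₘ .lab w (.all x A) ::ₘ Γ) Δ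
  | rall {n w x z} {A : Fml} {Γ : Multiset LSForm} {Δ : Multiset (ℕ × Fml)} :
      z ∉ seqVars Γ ((w, .all x A) ::ₘ Δ) →
      Der n (.mem z w ::ₘ Γ) ((w, A.substV x z) ::ₘ Δ) →
      Der (n + 1) Γ ((w, .all x A) ::ₘ Δ)
  | lex {n w x z} {A : Fml} {Γ : Multiset LSForm} {Δ : Multiset (ℕ × Fml)} :
      z ∉ seqVars (.lab w (.ex x A) ::ₘ Γ) Δ →
      Der n (.mem z w ::ₘ .lab w (A.substV x z) ::ₘ Γ) Δ →
      Der (n + 1) (.lab w (.ex x A) ::ₘ Γ) Δ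
  | rex {n w x y} {A : Fml} {Γ : Multiset LSForm} {Δ : Multiset (ℕ × Fml)} :
      Der n (.mem y w ::ₘ Γ) ((w, A.substV x y) ::ₘ (w, .ex x A) ::ₘ Δ) →
      Der (n + 1) (.mem y w ::ₘ Γ) ((w, .ex x A) ::ₘ Δ)
  | lbox {n w v} {A : Fml} {Γ : Multiset LSForm} {Δ : Multiset (ℕ × Fml)} :
      Der n (.lab v A ::ₘ .rel w v ::ₘ .lab w (.box A) ::ₘ Γ) Δ →
      Der (n + 1) (.rel w v ::ₘ .lab w (.box A) ::ₘ Γ) Δ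
  | rbox {n w u} {A : Fml} {Γ : Multiset LSForm} {Δ : Multiset (ℕ × Fml)} :
      u ∉ seqLabs Γ ((w, .box A) ::ₘ Δ) →
      Der n (.rel w u ::ₘ Γ) ((u, A) ::ₘ Δ) →
      Der (n + 1) Γ ((w, .box A) ::ₘ Δ)
  | ldia {n w u} {A : Fml} {Γ : Multiset LSForm} {Δ : Multiset (ℕ × Fml)} :
      u ∉ seqLabs (.lab w (.dia A) ::ₘ Γ) Δ →
      Der n (.rel w u ::ₘ .lab u A ::ₘ Γ) Δ →
      Der (n + 1) (.lab w (.dia A) ::ₘ Γ) Δ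
  | rdia {n w v} {A : Fml} {Γ : Multiset LSForm} {Δ : Multiset (ℕ × Fml)} :
      Der n (.rel w v ::ₘ Γ) ((w, .dia A) ::ₘ (v, A) ::ₘ Δ) →
      Der (n + 1) (.rel w v ::ₘ Γ) ((w, .dia A) ::ₘ Δ)

set_option linter.unusedSimpArgs false

namespace G3

def ren (f : ℕ → ℕ) : Fml → Fml
  | .atom P args => .atom P (args.map f)
  | .bot => .bot
  | .and A B => .and (ren f A) (ren f B)
  | .or A B => .or (ren f A) (ren f B)
  | .imp A B => .imp (ren f A) (ren f B)
  | .all z A => .all (f z) (ren f A)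
  | .ex z A => .ex (f z) (ren f A)
  | .box A => .box (ren f A)
  | .dia A => .dia (ren f A)

theorem ren_substV (f : ℕ → ℕ) (hf : Function.Injective f) (x y : ℕ) (A : Fml) :
    ren f (A.substV x y) = (ren f A).substV (f x) (f y) := by
  induction A with
  | atom P args =>
    simp only [Fml.substV, ren, List.map_map, Fml.atom.injEq, true_and]
    apply List.map_congr_left
    intro a _
    by_cases h : a = x
    · simp [h]
    · simp [h, hf.eq_iff]
  | all z A ih =>
    by_cases h : z = x
    · simp [h, Fml.substV, ren]
    · simp [h, Fml.substV, ren, hf.eq_iff, ih]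
  | ex z A ih =>
    by_cases h : z = x
    · simp [h, Fml.substV, ren]
    · simp [h, Fml.substV, ren, hf.eq_iff, ih]
  | _ => simp_all [Fml.substV, ren]

theorem ren_substVp (f : Equiv.Perm ℕ) (x y : ℕ) (A : Fml) :
    ren f (A.substV x y) = (ren f A).substV (f x) (f y) := ren_substV f f.injective x y A

theorem ren_congr {f g : ℕ → ℕ} (A : Fml) (h : ∀ x ∈ A.vars, f x = g x) : ren f A = ren g A := by
  induction A with
  | atom P args =>
    simp only [ren, Fml.atom.injEq, true_and]
    exact List.map_congr_left h
  | _ => simp_all [Fml.vars, ren]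

theorem ren_id (A : Fml) : ren id A = A := by
  induction A <;> simp_all [ren]

theorem vars_substV {x y v : ℕ} {A : Fml} (h : v ∈ (A.substV x y).vars) : v ∈ A.vars ∨ v = y := by
  induction A with
  | atom P args =>
    simp only [Fml.substV, Fml.vars, Set.mem_ofPred_eq, List.mem_map] at h ⊢
    obtain ⟨a, ha, rfl⟩ := h
    split_ifs
    · exact Or.inr rfl
    · exact Or.inl ha
  | all z A ih =>
    simp only [Fml.substV] at h
    split_ifs at h
    · exact Or.inl h
    · simp only [Fml.vars, Set.mem_insert_iff] at h ⊢; tauto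
  | ex z A ih =>
    simp only [Fml.substV] at h
    split_ifs at h
    · exact Or.inl h
    · simp only [Fml.vars, Set.mem_insert_iff] at h ⊢; tauto
  | _ => simp only [Fml.substV, Fml.vars, Set.mem_union, Set.mem_empty_iff_false] at * <;> tauto

theorem fin_vars (A : Fml) : A.vars.Finite := by
  induction A with
  | atom P args => exact List.finite_toSet args
  | _ => simp_all [Fml.vars]

def lren (f g : ℕ → ℕ) : LSForm → LSForm
  | .lab w A => .lab (g w) (ren f A)
  | .mem x w => .mem (f x) (g w)
  | .rel w v => .rel (g w) (g v)

def pren (f g : ℕ → ℕ) (p : ℕ × Fml) : ℕ × Fml := (g p.1, ren f p.2)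

theorem fin_lvars (E : LSForm) : E.vars.Finite := by
  cases E <;> simp [LSForm.vars, fin_vars]

theorem fin_llabs (E : LSForm) : E.labs.Finite := by
  cases E <;> simp [LSForm.labs]

theorem lren_congr {f g f' g' : ℕ → ℕ} (E : LSForm) (h : ∀ x ∈ E.vars, f x = f' x)
    (h' : ∀ x ∈ E.labs, g x = g' x) : lren f g E = lren f' g' E := by
  cases E with
  | lab w A => simp_all [lren, LSForm.vars, LSForm.labs, ren_congr A h]
  | mem x w => simp_all [lren, LSForm.vars, LSForm.labs]
  | rel x w => simp_all [lren, LSForm.vars, LSForm.labs]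

variable {Γ Γ' : Multiset LSForm} {Δ Δ' : Multiset (ℕ × Fml)}

theorem sv_consL {x E} : x ∈ seqVars (E ::ₘ Γ) Δ ↔ x ∈ E.vars ∨ x ∈ seqVars Γ Δ := by
  simp [seqVars, or_assoc]
theorem sv_consR {x p} : x ∈ seqVars Γ (p ::ₘ Δ) ↔ x ∈ p.2.vars ∨ x ∈ seqVars Γ Δ := by
  simp only [seqVars, Set.mem_ofPred_eq, Multiset.mem_cons, exists_eq_or_imp]; grind
theorem sl_consL {x E} : x ∈ seqLabs (E ::ₘ Γ) Δ ↔ x ∈ E.labs ∨ x ∈ seqLabs Γ Δ := by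
  simp [seqLabs, or_assoc]
theorem sl_consR {x p} : x ∈ seqLabs Γ (p ::ₘ Δ) ↔ x = p.1 ∨ x ∈ seqLabs Γ Δ := by
  simp only [seqLabs, Set.mem_ofPred_eq, Multiset.mem_cons, exists_eq_or_imp]; grind
theorem sv_add {x} : x ∈ seqVars (Γ + Γ') (Δ + Δ') ↔ x ∈ seqVars Γ Δ ∨ x ∈ seqVars Γ' Δ' := by
  simp only [seqVars, Set.mem_ofPred_eq, Multiset.mem_add, or_and_right, exists_or]; grind
theorem sl_add {x} : x ∈ seqLabs (Γ + Γ') (Δ + Δ') ↔ x ∈ seqLabs Γ Δ ∨ x ∈ seqLabs Γ' Δ' := by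
  simp only [seqLabs, Set.mem_ofPred_eq, Multiset.mem_add, or_and_right, exists_or]; grind

theorem fin_sv (Γ : Multiset LSForm) (Δ : Multiset (ℕ × Fml)) : (seqVars Γ Δ).Finite := by
  induction Γ using Multiset.induction with
  | empty =>
    induction Δ using Multiset.induction with
    | empty => simp [seqVars]
    | cons p Δ ih =>
      exact ((fin_vars p.2).union ih).subset fun x hx => sv_consR.1 hx
  | cons E Γ ih => exact ((fin_lvars E).union ih).subset fun x hx => sv_consL.1 hx

theorem fin_sl (Γ : Multiset LSForm) (Δ : Multiset (ℕ × Fml)) : (seqLabs Γ Δ).Finite := by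
  induction Γ using Multiset.induction with
  | empty =>
    induction Δ using Multiset.induction with
    | empty => simp [seqLabs]
    | cons p Δ ih =>
      exact ((Set.finite_singleton p.1).union ih).subset fun x hx => sl_consR.1 hx
  | cons E Γ ih => exact ((fin_llabs E).union ih).subset fun x hx => sl_consL.1 hx

theorem mapL_congr {f g f' g' : ℕ → ℕ} (h : ∀ x ∈ seqVars Γ Δ, f x = f' x)
    (h' : ∀ x ∈ seqLabs Γ Δ, g x = g' x) : Γ.map (lren f g) = Γ.map (lren f' g') :=
  Multiset.map_congr rfl fun E hE => lren_congr E (fun x hx => h x (Or.inl ⟨E, hE, hx⟩))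
    (fun x hx => h' x (Or.inl ⟨E, hE, hx⟩))

theorem mapR_congr {f g f' g' : ℕ → ℕ} (h : ∀ x ∈ seqVars Γ Δ, f x = f' x)
    (h' : ∀ x ∈ seqLabs Γ Δ, g x = g' x) : Δ.map (pren f g) = Δ.map (pren f' g') :=
  Multiset.map_congr rfl fun p hp => Prod.ext (h' _ (Or.inr ⟨p, hp, rfl⟩))
    (ren_congr p.2 (fun x hx => h x (Or.inr ⟨p, hp, hx⟩)))

theorem mapL_id : Γ.map (lren id id) = Γ := by
  conv_rhs => rw [← Multiset.map_id Γ]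
  refine Multiset.map_congr rfl fun E _ => ?_
  cases E <;> simp [lren, ren_id]

theorem mapR_id : Δ.map (pren id id) = Δ := by
  conv_rhs => rw [← Multiset.map_id Δ]
  refine Multiset.map_congr rfl fun E _ => ?_
  simp [pren, ren_id]

/-- Derivations whose eigenvariables and eigenlabels avoid `S`. -/
inductive DerS (S : Set ℕ) : ℕ → Multiset LSForm → Multiset (ℕ × Fml) → Prop where
  | init (n : ℕ) (w P : ℕ) (args : List ℕ) (Γ : Multiset LSForm) (Δ : Multiset (ℕ × Fml)) :
      DerS S n (.lab w (.atom P args) ::ₘ Γ) ((w, .atom P args) ::ₘ Δ)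
  | lbot (n w : ℕ) (Γ : Multiset LSForm) (Δ : Multiset (ℕ × Fml)) :
      DerS S n (.lab w .bot ::ₘ Γ) Δ
  | land {n : ℕ} {w : ℕ} {A B : Fml} {Γ Δ} :
      DerS S n (.lab w A ::ₘ .lab w B ::ₘ Γ) Δ →
      DerS S (n + 1) (.lab w (.and A B) ::ₘ Γ) Δ
  | rand {n w} {A B : Fml} {Γ Δ} :
      DerS S n Γ ((w, A) ::ₘ Δ) → DerS S n Γ ((w, B) ::ₘ Δ) →
      DerS S (n + 1) Γ ((w, .and A B) ::ₘ Δ)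
  | lor {n w} {A B : Fml} {Γ Δ} :
      DerS S n (.lab w A ::ₘ Γ) Δ → DerS S n (.lab w B ::ₘ Γ) Δ →
      DerS S (n + 1) (.lab w (.or A B) ::ₘ Γ) Δ
  | ror {n w} {A B : Fml} {Γ Δ} :
      DerS S n Γ ((w, A) ::ₘ (w, B) ::ₘ Δ) →
      DerS S (n + 1) Γ ((w, .or A B) ::ₘ Δ)
  | limp {n w} {A B : Fml} {Γ Δ} :
      DerS S n Γ ((w, A) ::ₘ Δ) → DerS S n (.lab w B ::ₘ Γ) Δ →
      DerS S (n + 1) (.lab w (.imp A B) ::ₘ Γ) Δ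
  | rimp {n w} {A B : Fml} {Γ Δ} :
      DerS S n (.lab w A ::ₘ Γ) ((w, B) ::ₘ Δ) →
      DerS S (n + 1) Γ ((w, .imp A B) ::ₘ Δ)
  | lall {n w x y} {A : Fml} {Γ Δ} :
      DerS S n (.lab w (A.substV x y) ::ₘ .mem y w ::ₘ .lab w (.all x A) ::ₘ Γ) Δ →
      DerS S (n + 1) (.mem y w ::ₘ .lab w (.all x A) ::ₘ Γ) Δ
  | rall {n w x z} {A : Fml} {Γ Δ} :
      z ∉ S → z ∉ seqVars Γ ((w, .all x A) ::ₘ Δ) →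
      DerS S n (.mem z w ::ₘ Γ) ((w, A.substV x z) ::ₘ Δ) →
      DerS S (n + 1) Γ ((w, .all x A) ::ₘ Δ)
  | lex {n w x z} {A : Fml} {Γ Δ} :
      z ∉ S → z ∉ seqVars (.lab w (.ex x A) ::ₘ Γ) Δ →
      DerS S n (.mem z w ::ₘ .lab w (A.substV x z) ::ₘ Γ) Δ →
      DerS S (n + 1) (.lab w (.ex x A) ::ₘ Γ) Δ
  | rex {n w x y} {A : Fml} {Γ Δ} :
      DerS S n (.mem y w ::ₘ Γ) ((w, A.substV x y) ::ₘ (w, .ex x A) ::ₘ Δ) →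
      DerS S (n + 1) (.mem y w ::ₘ Γ) ((w, .ex x A) ::ₘ Δ)
  | lbox {n w v} {A : Fml} {Γ Δ} :
      DerS S n (.lab v A ::ₘ .rel w v ::ₘ .lab w (.box A) ::ₘ Γ) Δ →
      DerS S (n + 1) (.rel w v ::ₘ .lab w (.box A) ::ₘ Γ) Δ
  | rbox {n w u} {A : Fml} {Γ Δ} :
      u ∉ S → u ∉ seqLabs Γ ((w, .box A) ::ₘ Δ) →
      DerS S n (.rel w u ::ₘ Γ) ((u, A) ::ₘ Δ) →
      DerS S (n + 1) Γ ((w, .box A) ::ₘ Δ)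
  | ldia {n w u} {A : Fml} {Γ Δ} :
      u ∉ S → u ∉ seqLabs (.lab w (.dia A) ::ₘ Γ) Δ →
      DerS S n (.rel w u ::ₘ .lab u A ::ₘ Γ) Δ →
      DerS S (n + 1) (.lab w (.dia A) ::ₘ Γ) Δ
  | rdia {n w v} {A : Fml} {Γ Δ} :
      DerS S n (.rel w v ::ₘ Γ) ((w, .dia A) ::ₘ (v, A) ::ₘ Δ) →
      DerS S (n + 1) (.rel w v ::ₘ Γ) ((w, .dia A) ::ₘ Δ)

theorem DerS.toDer {S : Set ℕ} {n} (h : DerS S n Γ Δ) : Der n Γ Δ := by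
  induction h with
  | init => apply Der.init
  | lbot => apply Der.lbot
  | land _ ih => exact .land ih
  | rand _ _ ih1 ih2 => exact .rand ih1 ih2
  | lor _ _ ih1 ih2 => exact .lor ih1 ih2
  | ror _ ih => exact .ror ih
  | limp _ _ ih1 ih2 => exact .limp ih1 ih2
  | rimp _ ih => exact .rimp ih
  | lall _ ih => exact .lall ih
  | rall _ h _ ih => exact .rall h ih
  | lex _ h _ ih => exact .lex h ih
  | rex _ ih => exact .rex ih
  | lbox _ ih => exact .lbox ih
  | rbox _ h _ ih => exact .rbox h ih
  | ldia _ h _ ih => exact .ldia h ih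
  | rdia _ ih => exact .rdia ih

theorem fresh_perm (f : Equiv.Perm ℕ) (z : ℕ) (V T : Set ℕ) (hV : V.Finite) (hT : T.Finite)
    (hz : z ∉ V) : ∃ f' : Equiv.Perm ℕ, f' z ∉ T ∧ ∀ x ∈ V, f x = f' x := by
  obtain ⟨z', hz'⟩ := ((hV.image f).union hT).exists_notMem
  refine ⟨f.trans (Equiv.swap (f z) z'), ?_, fun x hx => ?_⟩
  · simp only [Equiv.trans_apply, Equiv.swap_apply_left]
    exact fun h => hz' (Or.inr h)
  · simp only [Equiv.trans_apply]
    rw [Equiv.swap_apply_of_ne_of_ne]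
    · intro h; exact hz (f.injective h ▸ hx)
    · intro h; exact hz' (Or.inl ⟨x, hx, h⟩)

theorem big {S : Set ℕ} (hS : S.Finite) {n} (h : Der n Γ Δ) :
    ∀ (f g : Equiv.Perm ℕ) (m : ℕ) (Γ' : Multiset LSForm) (Δ' : Multiset (ℕ × Fml)), n ≤ m →
      DerS S m (Γ.map (lren f g) + Γ') (Δ.map (pren f g) + Δ') := by
  induction h with
  | init =>
    intro f g m Γ' Δ' hm
    simp only [Multiset.map_cons, Multiset.cons_add, lren, pren, ren]
    apply DerS.init
  | lbot =>
    intro f g m Γ' Δ' hm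
    simp only [Multiset.map_cons, Multiset.cons_add, lren, pren, ren]
    apply DerS.lbot
  | @rall n w x z A Γ Δ hz _ ih =>
    intro f g m Γ' Δ' hm
    obtain ⟨m, rfl⟩ : ∃ k, m = k + 1 := ⟨m - 1, by omega⟩
    obtain ⟨f', h1, h2⟩ := fresh_perm f z _ (S ∪ seqVars (Γ.map (lren f g) + Γ')
      (((w, .all x A) ::ₘ Δ).map (pren f g) + Δ')) (fin_sv _ _) (hS.union (fin_sv _ _)) hz
    rw [mapL_congr (g := g) (g' := g) h2 (fun _ _ => rfl),
      mapR_congr (g := g) (g' := g) h2 (fun x _ => rfl)] at h1 ⊢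
    simp only [Multiset.map_cons, Multiset.cons_add, lren, pren, ren] at h1 ih ⊢
    refine DerS.rall (fun h => h1 (Or.inl h)) (fun h => h1 (Or.inr h)) ?_
    rw [← ren_substV _ f'.injective]
    exact ih _ _ _ _ _ (by omega)
  | @lex n w x z A Γ Δ hz _ ih =>
    intro f g m Γ' Δ' hm
    obtain ⟨m, rfl⟩ : ∃ k, m = k + 1 := ⟨m - 1, by omega⟩
    obtain ⟨f', h1, h2⟩ := fresh_perm f z _ (S ∪ seqVars ((.lab w (.ex x A) ::ₘ Γ).map (lren f g) + Γ')
      (Δ.map (pren f g) + Δ')) (fin_sv _ _) (hS.union (fin_sv _ _)) hz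
    rw [mapL_congr (g := g) (g' := g) h2 (fun _ _ => rfl),
      mapR_congr (g := g) (g' := g) h2 (fun x _ => rfl)] at h1 ⊢
    simp only [Multiset.map_cons, Multiset.cons_add, lren, pren, ren] at h1 ih ⊢
    refine DerS.lex (fun h => h1 (Or.inl h)) (fun h => h1 (Or.inr h)) ?_
    rw [← ren_substV _ f'.injective]
    exact ih _ _ _ _ _ (by omega)
  | @rbox n w u A Γ Δ hz _ ih =>
    intro f g m Γ' Δ' hm
    obtain ⟨m, rfl⟩ : ∃ k, m = k + 1 := ⟨m - 1, by omega⟩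
    obtain ⟨g', h1, h2⟩ := fresh_perm g u _ (S ∪ seqLabs (Γ.map (lren f g) + Γ')
      (((w, .box A) ::ₘ Δ).map (pren f g) + Δ')) (fin_sl _ _) (hS.union (fin_sl _ _)) hz
    rw [mapL_congr (f := f) (f' := f) (fun _ _ => rfl) h2,
      mapR_congr (f := f) (f' := f) (fun x _ => rfl) h2] at h1 ⊢
    simp only [Multiset.map_cons, Multiset.cons_add, lren, pren, ren] at h1 ih ⊢
    refine DerS.rbox (fun h => h1 (Or.inl h)) (fun h => h1 (Or.inr h)) ?_
    exact ih _ _ _ _ _ (by omega)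
  | @ldia n w u A Γ Δ hz _ ih =>
    intro f g m Γ' Δ' hm
    obtain ⟨m, rfl⟩ : ∃ k, m = k + 1 := ⟨m - 1, by omega⟩
    obtain ⟨g', h1, h2⟩ := fresh_perm g u _ (S ∪ seqLabs ((.lab w (.dia A) ::ₘ Γ).map (lren f g) + Γ')
      (Δ.map (pren f g) + Δ')) (fin_sl _ _) (hS.union (fin_sl _ _)) hz
    rw [mapL_congr (f := f) (f' := f) (fun _ _ => rfl) h2,
      mapR_congr (f := f) (f' := f) (fun x _ => rfl) h2] at h1 ⊢
    simp only [Multiset.map_cons, Multiset.cons_add, lren, pren, ren] at h1 ih ⊢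
    refine DerS.ldia (fun h => h1 (Or.inl h)) (fun h => h1 (Or.inr h)) ?_
    exact ih _ _ _ _ _ (by omega)
  | _ =>
    intro f g m Γ' Δ' hm
    obtain ⟨m, rfl⟩ : ∃ k, m = k + 1 := ⟨m - 1, by omega⟩
    simp only [Multiset.map_cons, Multiset.cons_add, lren, pren, ren,
      ren_substVp] at *
    constructor <;> solve_by_elim [Nat.le_of_succ_le_succ]

theorem wk {n m} (h : Der n Γ Δ) (hm : n ≤ m) (Γ' : Multiset LSForm) (Δ' : Multiset (ℕ × Fml)) :
    Der m (Γ' + Γ) (Δ' + Δ) := by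
  have := (big Set.finite_empty h 1 1 m Γ' Δ' hm).toDer
  rw [Equiv.Perm.coe_one, mapL_id, mapR_id] at this
  rwa [add_comm Γ', add_comm Δ']

theorem mono {n m} (h : Der n Γ Δ) (hm : n ≤ m) : Der m Γ Δ := by
  simpa using wk h hm 0 0

theorem avoid {S : Set ℕ} (hS : S.Finite) {n} (h : Der n Γ Δ) : DerS S n Γ Δ := by
  have := (big hS h 1 1 n 0 0 le_rfl)
  rw [Equiv.Perm.coe_one, mapL_id, mapR_id] at this
  simpa using this

theorem perm {n} (h : Der n Γ Δ) (f g : Equiv.Perm ℕ) :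
    Der n (Γ.map (lren f g)) (Δ.map (pren f g)) := by
  simpa using (big Set.finite_empty h f g n 0 0 le_rfl).toDer

theorem fixL {f g : Equiv.Perm ℕ} (h : ∀ x ∈ seqVars Γ Δ, f x = x)
    (h' : ∀ x ∈ seqLabs Γ Δ, g x = x) : Γ.map (lren f g) = Γ :=
  (mapL_congr (f' := id) (g' := id) h h').trans mapL_id

theorem fixR {f g : Equiv.Perm ℕ} (h : ∀ x ∈ seqVars Γ Δ, f x = x)
    (h' : ∀ x ∈ seqLabs Γ Δ, g x = x) : Δ.map (pren f g) = Δ :=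
  (mapR_congr (f' := id) (g' := id) h h').trans mapR_id

def Fresh (N M : Set ℕ) (Γ : Multiset LSForm) (Δ : Multiset (ℕ × Fml)) : Prop :=
  (∀ z ∈ N, z ∉ seqVars Γ Δ) ∧ (∀ u ∈ M, u ∉ seqLabs Γ Δ)


theorem sv_erase {x E} (h : x ∈ seqVars (Γ.erase E) Δ) : x ∈ seqVars Γ Δ := by
  rcases h with ⟨E, h, h'⟩ | h
  · exact Or.inl ⟨E, Multiset.mem_of_mem_erase h, h'⟩
  · exact Or.inr h

theorem sl_erase {x E} (h : x ∈ seqLabs (Γ.erase E) Δ) : x ∈ seqLabs Γ Δ := by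
  rcases h with ⟨E, h, h'⟩ | h
  · exact Or.inl ⟨E, Multiset.mem_of_mem_erase h, h'⟩
  · exact Or.inr h

theorem sv_eraseR {x p} (h : x ∈ seqVars Γ (Δ.erase p)) : x ∈ seqVars Γ Δ := by
  rcases h with h | ⟨E, h, h'⟩
  · exact Or.inl h
  · exact Or.inr ⟨E, Multiset.mem_of_mem_erase h, h'⟩

theorem sl_eraseR {x p} (h : x ∈ seqLabs Γ (Δ.erase p)) : x ∈ seqLabs Γ Δ := by
  rcases h with h | ⟨E, h, h'⟩
  · exact Or.inl h
  · exact Or.inr ⟨E, Multiset.mem_of_mem_erase h, h'⟩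

theorem erase_cons' {α : Type} [DecidableEq α] {a e : α} {s : Multiset α} (h : e ∈ s) :
    (a ::ₘ s).erase e = a ::ₘ s.erase e := by
  by_cases hae : a = e
  · subst hae; simp [Multiset.cons_erase h]
  · exact Multiset.erase_cons_tail _ hae

theorem fr {N M : Set ℕ} (hf : Fresh N M Γ Δ)
    (hv : ∀ z ∈ N, z ∈ seqVars Γ' Δ' → z ∈ seqVars Γ Δ := by
      simp only [sv_consL, sv_consR, LSForm.vars, Fml.vars, Set.mem_union, Set.mem_insert_iff,
        Set.mem_singleton_iff, Set.mem_empty_iff_false]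
      grind [vars_substV])
    (hl : ∀ z ∈ M, z ∈ seqLabs Γ' Δ' → z ∈ seqLabs Γ Δ := by
      simp only [sl_consL, sl_consR, LSForm.labs, Set.mem_insert_iff, Set.mem_singleton_iff]
      grind) : Fresh N M Γ' Δ' :=
  ⟨fun z hz h => hf.1 z hz (hv z hz h), fun z hz h => hf.2 z hz (hl z hz h)⟩

theorem invL (w : ℕ) (F : Fml) (Γ0 : Multiset LSForm) (Δ0 : Multiset (ℕ × Fml)) (N M : Set ℕ)
    (hN : N.Finite) (hM : M.Finite)
    (h1 : ∀ P l, .atom P l ≠ F) (h2 : .bot ≠ F) (h3 : ∀ x A, .all x A ≠ F) (h4 : ∀ A, .box A ≠ F)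
    (hand : ∀ n A B Γ Δ, .and A B = F → Fresh N M (.lab w F ::ₘ Γ) Δ →
      Der n (.lab w A ::ₘ .lab w B ::ₘ Γ) Δ → Der n (Γ0 + Γ) (Δ0 + Δ))
    (hor : ∀ n A B Γ Δ, .or A B = F → Fresh N M (.lab w F ::ₘ Γ) Δ →
      Der n (.lab w A ::ₘ Γ) Δ → Der n (.lab w B ::ₘ Γ) Δ → Der n (Γ0 + Γ) (Δ0 + Δ))
    (himp : ∀ n A B Γ Δ, .imp A B = F → Fresh N M (.lab w F ::ₘ Γ) Δ →
      Der n Γ ((w, A) ::ₘ Δ) → Der n (.lab w B ::ₘ Γ) Δ → Der n (Γ0 + Γ) (Δ0 + Δ))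
    (hex : ∀ n x z A Γ Δ, .ex x A = F → Fresh N M (.lab w F ::ₘ Γ) Δ →
      z ∉ seqVars (.lab w F ::ₘ Γ) Δ →
      Der n (.mem z w ::ₘ .lab w (A.substV x z) ::ₘ Γ) Δ → Der n (Γ0 + Γ) (Δ0 + Δ))
    (hdia : ∀ n u A Γ Δ, .dia A = F → Fresh N M (.lab w F ::ₘ Γ) Δ →
      u ∉ seqLabs (.lab w F ::ₘ Γ) Δ →
      Der n (.rel w u ::ₘ .lab u A ::ₘ Γ) Δ → Der n (Γ0 + Γ) (Δ0 + Δ))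
    {n Γ Δ} (hder : Der n (.lab w F ::ₘ Γ) Δ) (hfr : Fresh N M (.lab w F ::ₘ Γ) Δ) :
    Der n (Γ0 + Γ) (Δ0 + Δ) := by
  have key : ∀ n Γ Δ, DerS (N ∪ M ∪ (seqVars Γ0 Δ0 ∪ seqLabs Γ0 Δ0)) n Γ Δ →
      .lab w F ∈ Γ → Fresh N M Γ Δ → Der n (Γ0 + Γ.erase (.lab w F)) (Δ0 + Δ) := by
    intro n Γ Δ h
    induction h with
    | init n w' P args Γ Δ =>
      intro hm hf
      have hm' : .lab w F ∈ Γ := by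
        rcases Multiset.mem_cons.1 hm with h | h
        · simp only [LSForm.lab.injEq] at h; exact absurd h.2.symm (h1 _ _)
        · exact h
      simp only [erase_cons' hm', Multiset.add_cons]
      apply Der.init
    | lbot n w' Γ Δ =>
      intro hm hf
      have hm' : .lab w F ∈ Γ := by
        rcases Multiset.mem_cons.1 hm with h | h
        · simp only [LSForm.lab.injEq] at h; exact absurd h.2.symm h2
        · exact h
      simp only [erase_cons' hm', Multiset.add_cons]
      apply Der.lbot
    | @land n w' A B Γ Δ hd ih =>
      intro hm hf
      by_cases hm' : .lab w F ∈ Γ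
      · have e1 := ih (by simp [hm']) (fr hf)
        simp only [erase_cons', hm', Multiset.mem_cons, or_true, Multiset.add_cons] at e1 ⊢
        exact .land e1
      · obtain ⟨rfl, rfl⟩ : w = w' ∧ F = .and A B := by simpa [hm'] using hm
        rw [Multiset.erase_cons_head]
        exact mono (hand _ _ _ _ _ rfl hf hd.toDer) (Nat.le_succ _)
    | @lor n w' A B Γ Δ hd hd2 ih ih2 =>
      intro hm hf
      by_cases hm' : .lab w F ∈ Γ
      · have e1 := ih (by simp [hm']) (fr hf)
        have e2 := ih2 (by simp [hm']) (fr hf)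
        simp only [erase_cons', hm', Multiset.mem_cons, or_true, Multiset.add_cons] at e1 e2 ⊢
        exact .lor e1 e2
      · obtain ⟨rfl, rfl⟩ : w = w' ∧ F = .or A B := by simpa [hm'] using hm
        rw [Multiset.erase_cons_head]
        exact mono (hor _ _ _ _ _ rfl hf hd.toDer hd2.toDer) (Nat.le_succ _)
    | @limp n w' A B Γ Δ hd hd2 ih ih2 =>
      intro hm hf
      by_cases hm' : .lab w F ∈ Γ
      · have e1 := ih (by simp [hm']) (fr hf)
        have e2 := ih2 (by simp [hm']) (fr hf)
        simp only [erase_cons', hm', Multiset.mem_cons, or_true, Multiset.add_cons] at e1 e2 ⊢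
        exact .limp e1 e2
      · obtain ⟨rfl, rfl⟩ : w = w' ∧ F = .imp A B := by simpa [hm'] using hm
        rw [Multiset.erase_cons_head]
        exact mono (himp _ _ _ _ _ rfl hf hd.toDer hd2.toDer) (Nat.le_succ _)
    | @lex n w' x z A Γ Δ hS hz hd ih =>
      intro hm hf
      by_cases hm' : .lab w F ∈ Γ
      · simp only [Set.mem_union, not_or] at hS
        have e1 := ih (by simp [hm']) (fr hf)
        simp only [erase_cons', hm', Multiset.mem_cons, or_true, Multiset.add_cons] at e1 ⊢
        refine .lex ?_ e1
        simp only [sv_consL, sv_consR, sv_add] at hz ⊢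
        grind [sv_erase]
      · obtain ⟨rfl, rfl⟩ : w = w' ∧ F = .ex x A := by simpa [hm'] using hm
        rw [Multiset.erase_cons_head]
        exact mono (hex _ _ _ _ _ _ rfl hf hz hd.toDer) (Nat.le_succ _)
    | @ldia n w' u A Γ Δ hS hz hd ih =>
      intro hm hf
      by_cases hm' : .lab w F ∈ Γ
      · simp only [Set.mem_union, not_or] at hS
        have e1 := ih (by simp [hm']) (fr hf)
        simp only [erase_cons', hm', Multiset.mem_cons, or_true, Multiset.add_cons] at e1 ⊢
        refine .ldia ?_ e1
        simp only [sl_consL, sl_consR, sl_add] at hz ⊢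
        grind [sl_erase]
      · obtain ⟨rfl, rfl⟩ : w = w' ∧ F = .dia A := by simpa [hm'] using hm
        rw [Multiset.erase_cons_head]
        exact mono (hdia _ _ _ _ _ rfl hf hz hd.toDer) (Nat.le_succ _)
    | @rall n w' x z A Γ Δ hS hz hd ih =>
      intro hm' hf
      simp only [Set.mem_union, not_or] at hS
      have e1 := ih (by simp [hm']) (fr hf)
      simp only [erase_cons', hm', Multiset.mem_cons, or_true, Multiset.add_cons] at e1 ⊢
      refine .rall ?_ e1
      simp only [sv_consL, sv_consR, sv_add] at hz ⊢
      grind [sv_erase]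
    | @rbox n w' u A Γ Δ hS hz hd ih =>
      intro hm' hf
      simp only [Set.mem_union, not_or] at hS
      have e1 := ih (by simp [hm']) (fr hf)
      simp only [erase_cons', hm', Multiset.mem_cons, or_true, Multiset.add_cons] at e1 ⊢
      refine .rbox ?_ e1
      simp only [sl_consL, sl_consR, sl_add] at hz ⊢
      grind [sl_erase]
    | @rand n w' A B Γ Δ hd hd2 ih ih2 =>
      intro hm' hf
      have e1 := ih (by simp [hm']) (fr hf)
      have e2 := ih2 (by simp [hm']) (fr hf)
      simp only [Multiset.add_cons] at e1 e2 ⊢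
      exact .rand e1 e2
    | @lall n w' x y A Γ Δ hd ih =>
      intro hm hf
      have hm' : .lab w F ∈ Γ := by
        have := h3 x A
        simp only [Multiset.mem_cons, reduceCtorEq, LSForm.lab.injEq, false_or] at hm
        grind
      have e1 := ih (by simp [hm']) (fr hf)
      simp only [erase_cons', hm', Multiset.mem_cons, or_true, Multiset.add_cons] at e1 ⊢
      exact .lall e1
    | @lbox n w' v A Γ Δ hd ih =>
      intro hm hf
      have hm' : .lab w F ∈ Γ := by
        have := h4 A
        simp only [Multiset.mem_cons, reduceCtorEq, LSForm.lab.injEq, false_or] at hm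
        grind
      have e1 := ih (by simp [hm']) (fr hf)
      simp only [erase_cons', hm', Multiset.mem_cons, or_true, Multiset.add_cons] at e1 ⊢
      exact .lbox e1
    | _ =>
      rename_i ih
      intro hm hf
      have hm' := hm
      try simp only [Multiset.mem_cons, reduceCtorEq, false_or] at hm'
      have e1 := ih (by simp [hm']) (fr hf)
      simp only [erase_cons', hm', Multiset.mem_cons, or_true, Multiset.add_cons] at e1 ⊢
      first | exact .ror e1 | exact .rimp e1 | exact .rex e1 | exact .rdia e1
  have := key n _ Δ (avoid ((hN.union hM).union ((fin_sv _ _).union (fin_sl _ _))) hder)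
    (Multiset.mem_cons_self _ _) hfr
  rwa [Multiset.erase_cons_head] at this

theorem invR (w : ℕ) (F : Fml) (Γ0 : Multiset LSForm) (Δ0 : Multiset (ℕ × Fml)) (N M : Set ℕ)
    (hN : N.Finite) (hM : M.Finite)
    (h1 : ∀ P l, .atom P l ≠ F) (h3 : ∀ x A, .ex x A ≠ F) (h4 : ∀ A, .dia A ≠ F)
    (hand : ∀ n A B Γ Δ, .and A B = F → Fresh N M Γ ((w, F) ::ₘ Δ) →
      Der n Γ ((w, A) ::ₘ Δ) → Der n Γ ((w, B) ::ₘ Δ) → Der n (Γ0 + Γ) (Δ0 + Δ))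
    (hor : ∀ n A B Γ Δ, .or A B = F → Fresh N M Γ ((w, F) ::ₘ Δ) →
      Der n Γ ((w, A) ::ₘ (w, B) ::ₘ Δ) → Der n (Γ0 + Γ) (Δ0 + Δ))
    (himp : ∀ n A B Γ Δ, .imp A B = F → Fresh N M Γ ((w, F) ::ₘ Δ) →
      Der n (.lab w A ::ₘ Γ) ((w, B) ::ₘ Δ) → Der n (Γ0 + Γ) (Δ0 + Δ))
    (hall : ∀ n x z A Γ Δ, .all x A = F → Fresh N M Γ ((w, F) ::ₘ Δ) →
      z ∉ seqVars Γ ((w, F) ::ₘ Δ) →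
      Der n (.mem z w ::ₘ Γ) ((w, A.substV x z) ::ₘ Δ) → Der n (Γ0 + Γ) (Δ0 + Δ))
    (hbox : ∀ n u A Γ Δ, .box A = F → Fresh N M Γ ((w, F) ::ₘ Δ) →
      u ∉ seqLabs Γ ((w, F) ::ₘ Δ) →
      Der n (.rel w u ::ₘ Γ) ((u, A) ::ₘ Δ) → Der n (Γ0 + Γ) (Δ0 + Δ))
    {n Γ Δ} (hder : Der n Γ ((w, F) ::ₘ Δ)) (hfr : Fresh N M Γ ((w, F) ::ₘ Δ)) :
    Der n (Γ0 + Γ) (Δ0 + Δ) := by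
  have key : ∀ n Γ Δ, DerS (N ∪ M ∪ (seqVars Γ0 Δ0 ∪ seqLabs Γ0 Δ0)) n Γ Δ →
      (w, F) ∈ Δ → Fresh N M Γ Δ → Der n (Γ0 + Γ) (Δ0 + Δ.erase (w, F)) := by
    intro n Γ Δ h
    induction h with
    | init n w' P args Γ Δ =>
      intro hm hf
      have hm' : (w, F) ∈ Δ := by
        rcases Multiset.mem_cons.1 hm with h | h
        · simp only [Prod.mk.injEq] at h; exact absurd h.2.symm (h1 _ _)
        · exact h
      simp only [erase_cons' hm', Multiset.add_cons]
      apply Der.init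
    | lbot n w' Γ Δ =>
      intro hm hf
      simp only [Multiset.add_cons]
      apply Der.lbot
    | @rand n w' A B Γ Δ hd hd2 ih ih2 =>
      intro hm hf
      by_cases hm' : (w, F) ∈ Δ
      · have e1 := ih (by simp [hm']) (fr hf)
        have e2 := ih2 (by simp [hm']) (fr hf)
        simp only [erase_cons', hm', Multiset.mem_cons, or_true, Multiset.add_cons] at e1 e2 ⊢
        exact .rand e1 e2
      · obtain ⟨rfl, rfl⟩ : w = w' ∧ F = .and A B := by simpa [hm'] using hm
        rw [Multiset.erase_cons_head]
        exact mono (hand _ _ _ _ _ rfl hf hd.toDer hd2.toDer) (Nat.le_succ _)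
    | @ror n w' A B Γ Δ hd ih =>
      intro hm hf
      by_cases hm' : (w, F) ∈ Δ
      · have e1 := ih (by simp [hm']) (fr hf)
        simp only [erase_cons', hm', Multiset.mem_cons, or_true, Multiset.add_cons] at e1 ⊢
        exact .ror e1
      · obtain ⟨rfl, rfl⟩ : w = w' ∧ F = .or A B := by simpa [hm'] using hm
        rw [Multiset.erase_cons_head]
        exact mono (hor _ _ _ _ _ rfl hf hd.toDer) (Nat.le_succ _)
    | @rimp n w' A B Γ Δ hd ih =>
      intro hm hf
      by_cases hm' : (w, F) ∈ Δ
      · have e1 := ih (by simp [hm']) (fr hf)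
        simp only [erase_cons', hm', Multiset.mem_cons, or_true, Multiset.add_cons] at e1 ⊢
        exact .rimp e1
      · obtain ⟨rfl, rfl⟩ : w = w' ∧ F = .imp A B := by simpa [hm'] using hm
        rw [Multiset.erase_cons_head]
        exact mono (himp _ _ _ _ _ rfl hf hd.toDer) (Nat.le_succ _)
    | @rall n w' x z A Γ Δ hS hz hd ih =>
      intro hm hf
      by_cases hm' : (w, F) ∈ Δ
      · simp only [Set.mem_union, not_or] at hS
        have e1 := ih (by simp [hm']) (fr hf)
        simp only [erase_cons', hm', Multiset.mem_cons, or_true, Multiset.add_cons] at e1 ⊢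
        refine .rall ?_ e1
        simp only [sv_consL, sv_consR, sv_add] at hz ⊢
        grind [sv_eraseR]
      · obtain ⟨rfl, rfl⟩ : w = w' ∧ F = .all x A := by simpa [hm'] using hm
        rw [Multiset.erase_cons_head]
        exact mono (hall _ _ _ _ _ _ rfl hf hz hd.toDer) (Nat.le_succ _)
    | @rbox n w' u A Γ Δ hS hz hd ih =>
      intro hm hf
      by_cases hm' : (w, F) ∈ Δ
      · simp only [Set.mem_union, not_or] at hS
        have e1 := ih (by simp [hm']) (fr hf)
        simp only [erase_cons', hm', Multiset.mem_cons, or_true, Multiset.add_cons] at e1 ⊢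
        refine .rbox ?_ e1
        simp only [sl_consL, sl_consR, sl_add] at hz ⊢
        grind [sl_eraseR]
      · obtain ⟨rfl, rfl⟩ : w = w' ∧ F = .box A := by simpa [hm'] using hm
        rw [Multiset.erase_cons_head]
        exact mono (hbox _ _ _ _ _ rfl hf hz hd.toDer) (Nat.le_succ _)
    | @lex n w' x z A Γ Δ hS hz hd ih =>
      intro hm' hf
      simp only [Set.mem_union, not_or] at hS
      have e1 := ih (by simp [hm']) (fr hf)
      simp only [Multiset.add_cons] at e1 ⊢
      refine .lex ?_ e1
      simp only [sv_consL, sv_consR, sv_add] at hz ⊢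
      grind [sv_eraseR]
    | @ldia n w' u A Γ Δ hS hz hd ih =>
      intro hm' hf
      simp only [Set.mem_union, not_or] at hS
      have e1 := ih (by simp [hm']) (fr hf)
      simp only [Multiset.add_cons] at e1 ⊢
      refine .ldia ?_ e1
      simp only [sl_consL, sl_consR, sl_add] at hz ⊢
      grind [sl_eraseR]
    | @lor n w' A B Γ Δ hd hd2 ih ih2 =>
      intro hm' hf
      have e1 := ih (by simp [hm']) (fr hf)
      have e2 := ih2 (by simp [hm']) (fr hf)
      simp only [Multiset.add_cons] at e1 e2 ⊢
      exact .lor e1 e2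
    | @limp n w' A B Γ Δ hd hd2 ih ih2 =>
      intro hm' hf
      have e1 := ih (by simp [hm']) (fr hf)
      have e2 := ih2 (by simp [hm']) (fr hf)
      simp only [erase_cons', hm', Multiset.add_cons] at e1 e2 ⊢
      exact .limp e1 e2
    | @rex n w' x y A Γ Δ hd ih =>
      intro hm hf
      have hm' : (w, F) ∈ Δ := by
        have := h3 x A
        simp only [Multiset.mem_cons, Prod.mk.injEq] at hm
        grind
      have e1 := ih (by simp [hm']) (fr hf)
      simp only [erase_cons', hm', Multiset.mem_cons, or_true, Multiset.add_cons] at e1 ⊢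
      exact .rex e1
    | @rdia n w' v A Γ Δ hd ih =>
      intro hm hf
      have hm' : (w, F) ∈ Δ := by
        have := h4 A
        simp only [Multiset.mem_cons, Prod.mk.injEq] at hm
        grind
      have e1 := ih (by simp [hm']) (fr hf)
      simp only [erase_cons', hm', Multiset.mem_cons, or_true, Multiset.add_cons] at e1 ⊢
      exact .rdia e1
    | _ =>
      rename_i ih
      intro hm' hf
      have e1 := ih (by simp [hm']) (fr hf)
      simp only [Multiset.add_cons] at e1 ⊢
      first | exact .land e1 | exact .lall e1 | exact .lbox e1
  have := key n Γ _ (avoid ((hN.union hM).union ((fin_sv _ _).union (fin_sl _ _))) hder)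
    (Multiset.mem_cons_self _ _) hfr
  rwa [Multiset.erase_cons_head] at this

theorem swap_fix {V : Set ℕ} {a b : ℕ} (ha : a ∉ V) (hb : b ∉ V) :
    ∀ x ∈ V, Equiv.swap a b x = x := by
  intro x hx
  apply Equiv.swap_apply_of_ne_of_ne <;> rintro rfl <;> contradiction

theorem ren_fix {f : Equiv.Perm ℕ} {A : Fml} (h : ∀ x ∈ A.vars, f x = x) : ren f A = A :=
  (ren_congr (g := id) A h).trans (ren_id A)

theorem fresh_nil : Fresh ∅ ∅ Γ Δ := by simp [Fresh]

theorem cast' {n} (h1 : Γ' = Γ) (h2 : Δ' = Δ) (h : Der n Γ' Δ') : Der n Γ Δ := h1 ▸ h2 ▸ h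

end G3

open G3

/-- every rule of G3Q.K is height-preserving invertible: if the
conclusion of a rule instance is derivable with height at most `n`, then each
premiss is derivable with height at most `n` (for rules with eigenvariable
conditions, for any choice of fresh eigenvariable). -/
theorem all_rules_hp_invertible (n : ℕ) :
    -- L∧
    (∀ w A B (Γ : Multiset LSForm) (Δ : Multiset (ℕ × Fml)),
      Der n (.lab w (.and A B) ::ₘ Γ) Δ → Der n (.lab w A ::ₘ .lab w B ::ₘ Γ) Δ) ∧
    -- R∧
    (∀ w A B (Γ : Multiset LSForm) (Δ : Multiset (ℕ × Fml)),
      Der n Γ ((w, .and A B) ::ₘ Δ) →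
        Der n Γ ((w, A) ::ₘ Δ) ∧ Der n Γ ((w, B) ::ₘ Δ)) ∧
    -- L∨
    (∀ w A B (Γ : Multiset LSForm) (Δ : Multiset (ℕ × Fml)),
      Der n (.lab w (.or A B) ::ₘ Γ) Δ →
        Der n (.lab w A ::ₘ Γ) Δ ∧ Der n (.lab w B ::ₘ Γ) Δ) ∧
    -- R∨
    (∀ w A B (Γ : Multiset LSForm) (Δ : Multiset (ℕ × Fml)),
      Der n Γ ((w, .or A B) ::ₘ Δ) → Der n Γ ((w, A) ::ₘ (w, B) ::ₘ Δ)) ∧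
    -- L⊃
    (∀ w A B (Γ : Multiset LSForm) (Δ : Multiset (ℕ × Fml)),
      Der n (.lab w (.imp A B) ::ₘ Γ) Δ →
        Der n Γ ((w, A) ::ₘ Δ) ∧ Der n (.lab w B ::ₘ Γ) Δ) ∧
    -- R⊃
    (∀ w A B (Γ : Multiset LSForm) (Δ : Multiset (ℕ × Fml)),
      Der n Γ ((w, .imp A B) ::ₘ Δ) → Der n (.lab w A ::ₘ Γ) ((w, B) ::ₘ Δ)) ∧
    -- L∀
    (∀ w x y A (Γ : Multiset LSForm) (Δ : Multiset (ℕ × Fml)),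
      Der n (.mem y w ::ₘ .lab w (.all x A) ::ₘ Γ) Δ →
        Der n (.lab w (A.substV x y) ::ₘ .mem y w ::ₘ .lab w (.all x A) ::ₘ Γ) Δ) ∧
    -- R∀ (eigenvariable z)
    (∀ w x z A (Γ : Multiset LSForm) (Δ : Multiset (ℕ × Fml)),
      z ∉ seqVars Γ ((w, .all x A) ::ₘ Δ) →
      Der n Γ ((w, .all x A) ::ₘ Δ) →
        Der n (.mem z w ::ₘ Γ) ((w, A.substV x z) ::ₘ Δ)) ∧
    -- L∃ (eigenvariable z)
    (∀ w x z A (Γ : Multiset LSForm) (Δ : Multiset (ℕ × Fml)),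
      z ∉ seqVars (.lab w (.ex x A) ::ₘ Γ) Δ →
      Der n (.lab w (.ex x A) ::ₘ Γ) Δ →
        Der n (.mem z w ::ₘ .lab w (A.substV x z) ::ₘ Γ) Δ) ∧
    -- R∃
    (∀ w x y A (Γ : Multiset LSForm) (Δ : Multiset (ℕ × Fml)),
      Der n (.mem y w ::ₘ Γ) ((w, .ex x A) ::ₘ Δ) →
        Der n (.mem y w ::ₘ Γ) ((w, A.substV x y) ::ₘ (w, .ex x A) ::ₘ Δ)) ∧
    -- L□
    (∀ w v A (Γ : Multiset LSForm) (Δ : Multiset (ℕ × Fml)),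
      Der n (.rel w v ::ₘ .lab w (.box A) ::ₘ Γ) Δ →
        Der n (.lab v A ::ₘ .rel w v ::ₘ .lab w (.box A) ::ₘ Γ) Δ) ∧
    -- R□ (eigenlabel u)
    (∀ w u A (Γ : Multiset LSForm) (Δ : Multiset (ℕ × Fml)),
      u ∉ seqLabs Γ ((w, .box A) ::ₘ Δ) →
      Der n Γ ((w, .box A) ::ₘ Δ) →
        Der n (.rel w u ::ₘ Γ) ((u, A) ::ₘ Δ)) ∧
    -- L◇ (eigenlabel u)
    (∀ w u A (Γ : Multiset LSForm) (Δ : Multiset (ℕ × Fml)),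
      u ∉ seqLabs (.lab w (.dia A) ::ₘ Γ) Δ →
      Der n (.lab w (.dia A) ::ₘ Γ) Δ →
        Der n (.rel w u ::ₘ .lab u A ::ₘ Γ) Δ) ∧
    -- R◇
    (∀ w v A (Γ : Multiset LSForm) (Δ : Multiset (ℕ × Fml)),
      Der n (.rel w v ::ₘ Γ) ((w, .dia A) ::ₘ Δ) →
        Der n (.rel w v ::ₘ Γ) ((w, .dia A) ::ₘ (v, A) ::ₘ Δ)) := by
  refine ⟨?_, ?_, ?_, ?_, ?_, ?_, ?_, ?_, ?_, ?_, ?_, ?_, ?_, ?_⟩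
  · intro w A B Γ Δ h
    refine cast' (by simp) (by simp) (?_ : Der n ((.lab w A ::ₘ .lab w B ::ₘ 0) + Γ) (0 + Δ))
    refine invL w (.and A B) _ _ ∅ ∅ Set.finite_empty Set.finite_empty nofun nofun nofun nofun
      ?_ nofun nofun nofun nofun h fresh_nil
    rintro n A B Γ Δ ⟨rfl, rfl⟩ - h
    simpa using h
  · intro w A B Γ Δ h
    constructor
    · refine cast' (by simp) (by simp) (?_ : Der n (0 + Γ) (((w, A) ::ₘ 0) + Δ))
      refine invR w (.and A B) _ _ ∅ ∅ Set.finite_empty Set.finite_empty nofun nofun nofun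
        ?_ nofun nofun nofun nofun h fresh_nil
      rintro n A B Γ Δ ⟨rfl, rfl⟩ - h h'
      simpa using h
    · refine cast' (by simp) (by simp) (?_ : Der n (0 + Γ) (((w, B) ::ₘ 0) + Δ))
      refine invR w (.and A B) _ _ ∅ ∅ Set.finite_empty Set.finite_empty nofun nofun nofun
        ?_ nofun nofun nofun nofun h fresh_nil
      rintro n A B Γ Δ ⟨rfl, rfl⟩ - h h'
      simpa using h'
  · intro w A B Γ Δ h
    constructor
    · refine cast' (by simp) (by simp) (?_ : Der n ((.lab w A ::ₘ 0) + Γ) (0 + Δ))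
      refine invL w (.or A B) _ _ ∅ ∅ Set.finite_empty Set.finite_empty nofun nofun nofun nofun
        nofun ?_ nofun nofun nofun h fresh_nil
      rintro n A B Γ Δ ⟨rfl, rfl⟩ - h h'
      simpa using h
    · refine cast' (by simp) (by simp) (?_ : Der n ((.lab w B ::ₘ 0) + Γ) (0 + Δ))
      refine invL w (.or A B) _ _ ∅ ∅ Set.finite_empty Set.finite_empty nofun nofun nofun nofun
        nofun ?_ nofun nofun nofun h fresh_nil
      rintro n A B Γ Δ ⟨rfl, rfl⟩ - h h'
      simpa using h'
  · intro w A B Γ Δ h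
    refine cast' (by simp) (by simp) (?_ : Der n (0 + Γ) (((w, A) ::ₘ (w, B) ::ₘ 0) + Δ))
    refine invR w (.or A B) _ _ ∅ ∅ Set.finite_empty Set.finite_empty nofun nofun nofun
      nofun ?_ nofun nofun nofun h fresh_nil
    rintro n A B Γ Δ ⟨rfl, rfl⟩ - h
    simpa using h
  · intro w A B Γ Δ h
    constructor
    · refine cast' (by simp) (by simp) (?_ : Der n (0 + Γ) (((w, A) ::ₘ 0) + Δ))
      refine invL w (.imp A B) _ _ ∅ ∅ Set.finite_empty Set.finite_empty nofun nofun nofun nofun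
        nofun nofun ?_ nofun nofun h fresh_nil
      rintro n A B Γ Δ ⟨rfl, rfl⟩ - h h'
      simpa using h
    · refine cast' (by simp) (by simp) (?_ : Der n ((.lab w B ::ₘ 0) + Γ) (0 + Δ))
      refine invL w (.imp A B) _ _ ∅ ∅ Set.finite_empty Set.finite_empty nofun nofun nofun nofun
        nofun nofun ?_ nofun nofun h fresh_nil
      rintro n A B Γ Δ ⟨rfl, rfl⟩ - h h'
      simpa using h'
  · intro w A B Γ Δ h
    refine cast' (by simp) (by simp) (?_ : Der n ((.lab w A ::ₘ 0) + Γ) (((w, B) ::ₘ 0) + Δ))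
    refine invR w (.imp A B) _ _ ∅ ∅ Set.finite_empty Set.finite_empty nofun nofun nofun
      nofun nofun ?_ nofun nofun h fresh_nil
    rintro n A B Γ Δ ⟨rfl, rfl⟩ - h
    simpa using h
  · intro w x y A Γ Δ h
    simpa only [Multiset.cons_add, zero_add] using wk h le_rfl (.lab w (A.substV x y) ::ₘ 0) 0
  · intro w x z A Γ Δ hz h
    refine cast' (by simp) (by simp) (?_ : Der n ((.mem z w ::ₘ 0) + Γ) (((w, A.substV x z) ::ₘ 0) + Δ))
    refine invR w (.all x A) _ _ {z} ∅ (Set.finite_singleton z) Set.finite_empty nofun nofun nofun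
      nofun nofun nofun ?_ nofun h (by simpa [Fresh] using hz)
    rintro n x z' A Γ Δ ⟨rfl, rfl⟩ hf hz' h
    have hz := hf.1 z rfl
    have p := perm h (Equiv.swap z' z) 1
    have fx := swap_fix hz' hz
    have fA : ∀ y ∈ A.vars, Equiv.swap z' z y = y :=
      fun y hy => fx y (sv_consR.2 (Or.inl (Or.inr hy)))
    have fxx := fx x (sv_consR.2 (Or.inl (Or.inl rfl)))
    have fG : ∀ y ∈ seqVars Γ Δ, Equiv.swap z' z y = y := fun y hy => fx y (sv_consR.2 (Or.inr hy))
    simp only [Multiset.map_cons, lren, pren, ren_substVp, fixL fG (g := 1) (fun _ _ => rfl),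
      fixR fG (g := 1) (fun _ _ => rfl), ren_fix fA, fxx, Equiv.swap_apply_left] at p
    simpa using p
  · intro w x z A Γ Δ hz h
    refine cast' (by simp) (by simp) (?_ : Der n ((.mem z w ::ₘ .lab w (A.substV x z) ::ₘ 0) + Γ) (0 + Δ))
    refine invL w (.ex x A) _ _ {z} ∅ (Set.finite_singleton z) Set.finite_empty nofun nofun nofun nofun
      nofun nofun nofun ?_ nofun h (by simpa [Fresh] using hz)
    rintro n x z' A Γ Δ ⟨rfl, rfl⟩ hf hz' h
    have hz := hf.1 z rfl
    have p := perm h (Equiv.swap z' z) 1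
    have fx := swap_fix hz' hz
    have fA : ∀ y ∈ A.vars, Equiv.swap z' z y = y :=
      fun y hy => fx y (sv_consL.2 (Or.inl (Or.inr hy)))
    have fxx := fx x (sv_consL.2 (Or.inl (Or.inl rfl)))
    have fG : ∀ y ∈ seqVars Γ Δ, Equiv.swap z' z y = y := fun y hy => fx y (sv_consL.2 (Or.inr hy))
    simp only [Multiset.map_cons, lren, pren, ren_substVp, fixL fG (g := 1) (fun _ _ => rfl),
      fixR fG (g := 1) (fun _ _ => rfl), ren_fix fA, fxx, Equiv.swap_apply_left] at p
    simpa using p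
  · intro w x y A Γ Δ h
    simpa only [Multiset.cons_add, zero_add] using wk h le_rfl 0 ((w, A.substV x y) ::ₘ 0)
  · intro w v A Γ Δ h
    simpa only [Multiset.cons_add, zero_add] using wk h le_rfl (.lab v A ::ₘ 0) 0
  · intro w u A Γ Δ hz h
    refine cast' (by simp) (by simp) (?_ : Der n ((.rel w u ::ₘ 0) + Γ) (((u, A) ::ₘ 0) + Δ))
    refine invR w (.box A) _ _ ∅ {u} Set.finite_empty (Set.finite_singleton u) nofun nofun nofun
      nofun nofun nofun nofun ?_ h (by simpa [Fresh] using hz)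
    rintro n u' A Γ Δ ⟨rfl⟩ hf hz' h
    have hz := hf.2 u rfl
    have p := perm h 1 (Equiv.swap u' u)
    have fx := swap_fix hz' hz
    have fw := fx w (sl_consR.2 (Or.inl rfl))
    have fG : ∀ y ∈ seqLabs Γ Δ, Equiv.swap u' u y = y := fun y hy => fx y (sl_consR.2 (Or.inr hy))
    simp only [Multiset.map_cons, lren, pren, fixL (f := 1) (fun _ _ => rfl) fG,
      fixR (f := 1) (fun _ _ => rfl) fG, ren_fix (f := 1) (fun _ _ => rfl), fw,
      Equiv.swap_apply_left] at p
    simpa using p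
  · intro w u A Γ Δ hz h
    refine cast' (by simp) (by simp) (?_ : Der n ((.rel w u ::ₘ .lab u A ::ₘ 0) + Γ) (0 + Δ))
    refine invL w (.dia A) _ _ ∅ {u} Set.finite_empty (Set.finite_singleton u) nofun nofun nofun nofun
      nofun nofun nofun nofun ?_ h (by simpa [Fresh] using hz)
    rintro n u' A Γ Δ ⟨rfl⟩ hf hz' h
    have hz := hf.2 u rfl
    have p := perm h 1 (Equiv.swap u' u)
    have fx := swap_fix hz' hz
    have fw := fx w (sl_consL.2 (Or.inl rfl))
    have fG : ∀ y ∈ seqLabs Γ Δ, Equiv.swap u' u y = y := fun y hy => fx y (sl_consL.2 (Or.inr hy))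
    simp only [Multiset.map_cons, lren, pren, fixL (f := 1) (fun _ _ => rfl) fG,
      fixR (f := 1) (fun _ _ => rfl) fG, ren_fix (f := 1) (fun _ _ => rfl), fw,
      Equiv.swap_apply_left] at p
    simpa using p
  · intro w v A Γ Δ h
    have := wk h le_rfl 0 ((v, A) ::ₘ 0)
    rw [Multiset.cons_swap]
    simpa only [Multiset.cons_add, zero_add] using this
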